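/- arXiv:math/0306246 — 2 statements merged into one kernel-verified Lean document; each statement's English description precedes it below -/
import Mathlib

section
/- Let V_r^+ := φ({v ∈ C^{r+1}_* : v_{r+1} = +1}) and let Z_{r,m}^+ be an m-element subset of V_r^+ chosen uniformly at random. Then α(r+1, m) = (1/2^m) · E[χ(Z_{r,m}^+)]. -/
open Finset Filter MeasureTheory

open scoped Classical

noncomputable section

/-- The vertex set `{0,1}^d` of the 0/1-cube, as a finite subset of `ℝ^d`. -/
def cube01 (d : ℕ) : Finset (Fin d → ℝ) :=
  (Finset.univ : Finset (Fin d → Bool)).image (fun f i => if f i then 1 else 0)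

/-- The vertex set `{-1,+1}^d` of the `±1`-cube, as a finite subset of `ℝ^d`. -/
def pmCube (d : ℕ) : Finset (Fin d → ℝ) :=
  (Finset.univ : Finset (Fin d → Bool)).image (fun f i => if f i then 1 else -1)

/-- The all-one vector `𝟙 ∈ ℝ^d`. -/
def allOne (d : ℕ) : Fin d → ℝ := fun _ => 1

/-- `C^d_* = {-1,+1}^d \ {-𝟙, 𝟙}`. -/
def pmCubeStar (d : ℕ) : Finset (Fin d → ℝ) :=
  (pmCube d) \ {-(allOne d), allOne d}

/-- `{v,w}` spans an edge (a one-dimensional face) of the polytope `P`: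
`v ≠ w` and the segment `[v,w]` is an (exposed) face of `P`. -/
def IsEdge {d : ℕ} (P : Set (Fin d → ℝ)) (v w : Fin d → ℝ) : Prop :=
  v ≠ w ∧ IsExposed ℝ P (segment ℝ v w)

/-- The number of edges of the graph of the polytope `conv X`. -/
noncomputable def edgeCount {d : ℕ} (X : Finset (Fin d → ℝ)) : ℕ :=
  ((X.powersetCard 2).filter (fun e =>
      ∃ v w, e = {v, w} ∧ IsEdge (convexHull ℝ (X : Set (Fin d → ℝ))) v w)).card

/-- The density of the graph of the polytope `conv X` (whose vertex set is `X`
when `X` consists of 0/1- or `±1`-points): number of edges divided by `C(|X|,2)`. -/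
noncomputable def graphDensity {d : ℕ} (X : Finset (Fin d → ℝ)) : ℝ :=
  (edgeCount X : ℝ) / (X.card.choose 2 : ℝ)

/-- The expected graph-density of the convex hull of a uniformly random
`n`-element subset of `{0,1}^d`. -/
noncomputable def expDensity (d n : ℕ) : ℝ :=
  (∑ X ∈ (cube01 d).powersetCard n, graphDensity X) /
    (((cube01 d).powersetCard n).card : ℝ)

/-- The Hamming distance of `v, w ∈ ℝ^d`. -/
def hdist {d : ℕ} (v w : Fin d → ℝ) : ℕ :=
  (Finset.univ.filter (fun i => v i ≠ w i)).card

/-- `C(v,w)`: the points of the `±1`-cube agreeing with `v` and `w` wherever these agree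
(the vertex set of the smallest face of the cube containing `v` and `w`). -/
def cubeFace {d : ℕ} (v w : Fin d → ℝ) : Finset (Fin d → ℝ) :=
  (pmCube d).filter (fun x => ∀ i, v i = w i → x i = v i)

/-- `C_*(v,w) = C(v,w) \ {v,w}`. -/
def cubeFaceStar {d : ℕ} (v w : Fin d → ℝ) : Finset (Fin d → ℝ) :=
  (cubeFace v w) \ {v, w}

/-- The long-edge probability `τ(k,m)`: the probability that for a uniformly random
`m`-element subset `Y ⊆ C^k_*`, `conv Y ∩ conv{-𝟙,𝟙} = ∅`. -/
noncomputable def tau (k m : ℕ) : ℝ :=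
  ((((pmCubeStar k).powersetCard m).filter (fun Y =>
      convexHull ℝ (Y : Set (Fin k → ℝ)) ∩ segment ℝ (-(allOne k)) (allOne k) = ∅)).card : ℝ) /
    ((((pmCubeStar k).powersetCard m)).card : ℝ)

/-- `Y ∩ (-Y) = ∅`. -/
def NoAntipodal {k : ℕ} (Y : Finset (Fin k → ℝ)) : Prop := ∀ y ∈ Y, -y ∉ Y

/-- `α(k,m)`: the conditional probability that `conv Y ∩ conv{-𝟙,𝟙} = ∅`
given `Y ∩ (-Y) = ∅`, for a uniformly random `m`-element subset `Y ⊆ C^k_*`. -/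
noncomputable def alpha (k m : ℕ) : ℝ :=
  ((((pmCubeStar k).powersetCard m).filter (fun (Y : Finset (Fin k → ℝ)) =>
      convexHull ℝ (Y : Set (Fin k → ℝ)) ∩ segment ℝ (-(allOne k)) (allOne k) = ∅ ∧
        NoAntipodal Y)).card : ℝ) /
    ((((pmCubeStar k).powersetCard m).filter (fun Y => NoAntipodal Y)).card : ℝ)

/-- The sample space for a uniformly random `n`-element subset `X ⊆ {-1,+1}^d`
together with a uniformly random `2`-element subset `{v,w} ⊆ X`. -/
def edgeSpace (d n : ℕ) : Finset (Finset (Fin d → ℝ) × Finset (Fin d → ℝ)) :=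
  (((pmCube d).powersetCard n) ×ˢ ((pmCube d).powersetCard 2)).filter (fun p => p.2 ⊆ p.1)

/-- The event that the chosen pair `{v,w}` is an edge of `conv X`. -/
def EdgeEvent {d : ℕ} (p : Finset (Fin d → ℝ) × Finset (Fin d → ℝ)) : Prop :=
  ∃ v w, p.2 = {v, w} ∧ IsEdge (convexHull ℝ (p.1 : Set (Fin d → ℝ))) v w

/-- The event that the chosen pair `{v,w}` satisfies `dist(v,w) = k`. -/
def DistEvent {d : ℕ} (k : ℕ) (p : Finset (Fin d → ℝ) × Finset (Fin d → ℝ)) : Prop :=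
  ∃ v w, v ≠ w ∧ p.2 = {v, w} ∧ hdist v w = k

/-- The event that the chosen pair `{v,w}` satisfies `dist(v,w) = k` and
`#(X ∩ C_*(v,w)) = m`. -/
def DistCapEvent {d : ℕ} (k m : ℕ) (p : Finset (Fin d → ℝ) × Finset (Fin d → ℝ)) : Prop :=
  ∃ v w, v ≠ w ∧ p.2 = {v, w} ∧ hdist v w = k ∧ (p.1 ∩ cubeFaceStar v w).card = m

/-- The edge probability `π(d,n)`. -/
noncomputable def piEdge (d n : ℕ) : ℝ :=
  (((edgeSpace d n).filter (fun p => EdgeEvent p)).card : ℝ) / ((edgeSpace d n).card : ℝ)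

/-- The conditional edge probability `π_k(d,n)` given `dist(v,w) = k`. -/
noncomputable def piEdgeK (d n k : ℕ) : ℝ :=
  (((edgeSpace d n).filter (fun p => EdgeEvent p ∧ DistEvent k p)).card : ℝ) /
    (((edgeSpace d n).filter (fun p => DistEvent k p)).card : ℝ)

/-- `φ : ℝ^{r+1} → ℝ^r`: the orthogonal projection onto the hyperplane
`H_𝟙 = {x : 𝟙ᵀx = 0}` (namely `x ↦ x - ((𝟙ᵀx)/(r+1))·𝟙`), followed by the
projection to the first `r` coordinates. -/
noncomputable def phi (r : ℕ) (x : Fin (r + 1) → ℝ) : Fin r → ℝ :=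
  fun i => x i.castSucc - (∑ j, x j) / (r + 1 : ℝ)

/-- The vector configuration `V_r = φ(C^{r+1}_*)`. -/
noncomputable def Vr (r : ℕ) : Finset (Fin r → ℝ) := (pmCubeStar (r + 1)).image (phi r)

/-- The half configuration `V_r^+ = φ({v ∈ C^{r+1}_* : v_{r+1} = +1})`. -/
noncomputable def VrPlus (r : ℕ) : Finset (Fin r → ℝ) :=
  (((pmCubeStar (r + 1)).filter (fun v => v (Fin.last r) = 1))).image (phi r)

/-- The number of sign vectors `ε ∈ {-1,+1}^S` with `0 ∉ conv{ε_s · s : s ∈ S}`. -/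
noncomputable def signCount {r : ℕ} (S : Finset (Fin r → ℝ)) : ℕ :=
  ((Finset.univ : Finset (↥S → Bool)).filter (fun ε =>
      (0 : Fin r → ℝ) ∉ convexHull ℝ
        (Set.range fun s : ↥S => (if ε s then (1 : ℝ) else -1) • (s : Fin r → ℝ)))).card

/-- `α(S)`: the probability that `0 ∉ conv{ε_s · s : s ∈ S}` for a uniformly random
sign vector `ε ∈ {-1,+1}^S`. -/
noncomputable def alphaSet {r : ℕ} (S : Finset (Fin r → ℝ)) : ℝ :=
  (signCount S : ℝ) / ((Finset.univ : Finset (↥S → Bool)).card : ℝ)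

/-- The complement `ℝ^r \ ⋃_{s ∈ S} H(s)` of the hyperplane arrangement `ℋ(S)`. -/
def arrComplement {r : ℕ} (S : Finset (Fin r → ℝ)) : Set (Fin r → ℝ) :=
  {x | ∀ s ∈ S, ∑ i, s i * x i ≠ 0}

/-- `χ(S)`: the number of chambers (connected components of the complement)
of the hyperplane arrangement `ℋ(S)`. -/
noncomputable def chi {r : ℕ} (S : Finset (Fin r → ℝ)) : ℕ :=
  Nat.card (ConnectedComponents ↥(arrComplement S))

/-- `b(p,q) = ∑_{i=0}^p C(q,i)`. -/
def bFn (p q : ℕ) : ℕ := ∑ i ∈ Finset.range (p + 1), q.choose i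

/-!
On the cube `[-1, 1]^(r+1)` the kernel `ℝ𝟙` of `φ` cuts out exactly the segment `[-𝟙, 𝟙]`, so
`conv Y` misses this segment iff `0 ∉ conv (φ Y)`; as `φ` is injective on `C^{r+1}_*`, everything
can be counted inside `V_r = V_r^+ ∪ -V_r^+`. An `m`-subset of `V_r` without antipodal points is a
reorientation of a unique `m`-subset `Z` of `V_r^+`, and each `Z` has `2^m` reorientations. By
Gordan's theorem `0 ∉ conv Y` iff some `x` is strictly positive on `Y`, so the reorientations of `Z`
with `0 ∉ conv Y` are the sign vectors of points off the arrangement of `Z`, that is, its chambers.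
-/

open scoped Pointwise

section PowersetCardImage

variable {α β : Type*} [DecidableEq β] {f : α → β} {s : Finset α}

theorem powersetCard_image_of_injOn (hf : Set.InjOn f s) (m : ℕ) :
    powersetCard m (s.image f) = (powersetCard m s).image (image f) := by
  ext Z
  simp only [mem_powersetCard, mem_image, subset_image_iff]
  constructor
  · rintro ⟨⟨Y, hY, rfl⟩, hm⟩
    rw [card_image_of_injOn (hf.mono hY)] at hm
    exact ⟨Y, ⟨coe_subset.1 hY, hm⟩, rfl⟩
  · rintro ⟨Y, ⟨hY, hm⟩, rfl⟩
    exact ⟨⟨Y, coe_subset.2 hY, rfl⟩, by rwa [card_image_of_injOn (hf.mono hY)]⟩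

theorem card_filter_powersetCard_image (hf : Set.InjOn f s) (m : ℕ) (p : Finset β → Prop)
    [DecidablePred p] :
    #{Z ∈ powersetCard m (s.image f) | p Z} = #{Y ∈ powersetCard m s | p (Y.image f)} := by
  have hinj : Set.InjOn (image f) (powersetCard m s) :=
    (image_injOn_powerset_of_injOn hf).mono fun _ hY ↦ mem_powerset.2 (mem_powersetCard.1 hY).1
  rw [powersetCard_image_of_injOn hf, filter_image,
    card_image_of_injOn (hinj.mono (coe_subset.2 (filter_subset _ _)))]

end PowersetCardImage

section Reorientation

variable {E : Type*} [InvolutiveNeg E] [DecidableEq E] {H Y Z T : Finset E}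

/-- The reorientation of the configuration `Z` that keeps the elements of `T ⊆ Z` and replaces all
other elements of `Z` by their negatives; the subset `T` encodes a sign vector on `Z`. -/
def reorient (Z T : Finset E) : Finset E := T ∪ -(Z \ T)

theorem mem_reorient {y : E} : y ∈ reorient Z T ↔ y ∈ T ∨ -y ∈ Z ∧ -y ∉ T := by
  rw [reorient, mem_union, mem_neg', Finset.mem_sdiff]

theorem disjoint_neg_self_iff : Disjoint Y (-Y) ↔ ∀ y ∈ Y, -y ∉ Y := by
  simp only [Finset.disjoint_left, mem_neg']

theorem reorient_subset (hT : T ⊆ Z) (hZ : Z ⊆ H) : reorient Z T ⊆ H ∪ -H :=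
  union_subset_union (hT.trans hZ) (neg_subset_neg (sdiff_subset.trans hZ))

theorem disjoint_neg_reorient (hZ : Disjoint Z (-Z)) (hT : T ⊆ Z) :
    Disjoint (reorient Z T) (-reorient Z T) := by
  rw [disjoint_neg_self_iff] at *
  intro y
  have := @hT y
  have := @hT (-y)
  have := hZ y
  simp only [mem_reorient, neg_neg]
  tauto

theorem card_reorient (hZ : Disjoint Z (-Z)) (hT : T ⊆ Z) : #(reorient Z T) = #Z := by
  have hdisj : Disjoint T (-(Z \ T)) := hZ.mono hT (neg_subset_neg sdiff_subset)
  rw [reorient, card_union_of_disjoint hdisj, card_neg, add_comm, card_sdiff_add_card_eq_card hT]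

theorem inter_reorient (hH : Disjoint H (-H)) (hZ : Z ⊆ H) (hT : T ⊆ Z) :
    H ∩ reorient Z T = T := by
  rw [disjoint_neg_self_iff] at hH
  ext y
  have := hH y
  have := @hT y
  have := @hZ y
  have := @hZ (-y)
  simp only [mem_inter, mem_reorient]
  tauto

theorem reorient_union_neg_reorient (hT : T ⊆ Z) :
    reorient Z T ∪ -reorient Z T = Z ∪ -Z := by
  ext y
  have := @hT y
  have := @hT (-y)
  simp only [mem_union, mem_neg', mem_reorient, neg_neg]
  tauto

theorem inter_union_neg_eq (hH : Disjoint H (-H)) (hZ : Z ⊆ H) : H ∩ (Z ∪ -Z) = Z := by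
  rw [inter_union_distrib_left, inter_eq_right.2 hZ,
    disjoint_iff_inter_eq_empty.1 (hH.mono_right (neg_subset_neg hZ)), union_empty]

theorem reorient_inter_union_neg (hY : Disjoint Y (-Y)) (hYH : Y ⊆ H ∪ -H) :
    reorient (H ∩ (Y ∪ -Y)) (H ∩ Y) = Y := by
  rw [disjoint_neg_self_iff] at hY
  ext y
  have := hY y
  have hyH := @hYH y
  simp only [mem_reorient, mem_inter, mem_union, mem_neg', neg_neg] at hyH ⊢
  tauto

theorem filter_disjoint_neg_powersetCard (hH : Disjoint H (-H)) (m : ℕ) :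
    {Y ∈ powersetCard m (H ∪ -H) | Disjoint Y (-Y)} =
      ((powersetCard m H).sigma powerset).image fun W ↦ reorient W.1 W.2 := by
  ext Y
  simp only [mem_filter, mem_powersetCard, mem_image, mem_sigma, mem_powerset, Sigma.exists]
  constructor
  · rintro ⟨⟨hYH, rfl⟩, hY⟩
    have hsub : H ∩ Y ⊆ H ∩ (Y ∪ -Y) := inter_subset_inter_left subset_union_left
    have hdisj : Disjoint (H ∩ (Y ∪ -Y)) (-(H ∩ (Y ∪ -Y))) :=
      hH.mono inter_subset_left (neg_subset_neg inter_subset_left)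
    have hreorient := reorient_inter_union_neg hY hYH
    exact ⟨_, _, ⟨⟨inter_subset_left, by rw [← card_reorient hdisj hsub, hreorient]⟩, hsub⟩,
      hreorient⟩
  · rintro ⟨Z, T, ⟨⟨hZ, rfl⟩, hT⟩, rfl⟩
    have hdisj : Disjoint Z (-Z) := hH.mono hZ (neg_subset_neg hZ)
    exact ⟨⟨reorient_subset hT hZ, card_reorient hdisj hT⟩, disjoint_neg_reorient hdisj hT⟩

theorem injOn_reorient (hH : Disjoint H (-H)) (m : ℕ) :
    Set.InjOn (fun W : Σ _ : Finset E, Finset E ↦ reorient W.1 W.2)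
      ((powersetCard m H).sigma powerset) := by
  refine Set.LeftInvOn.injOn (f₁' := fun Y ↦ ⟨H ∩ (Y ∪ -Y), H ∩ Y⟩) ?_
  rintro ⟨Z, T⟩ hW
  simp only [coe_sigma, Set.mem_sigma_iff, mem_coe, mem_powersetCard, mem_powerset] at hW
  obtain ⟨⟨hZ, -⟩, hT⟩ := hW
  simp only [reorient_union_neg_reorient hT, inter_union_neg_eq hH hZ, inter_reorient hH hZ hT]

theorem card_filter_and_disjoint_neg_powersetCard (hH : Disjoint H (-H)) (m : ℕ)
    (p : Finset E → Prop) [DecidablePred p] :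
    #{Y ∈ powersetCard m (H ∪ -H) | p Y ∧ Disjoint Y (-Y)} =
      ∑ Z ∈ powersetCard m H, #{T ∈ Z.powerset | p (reorient Z T)} := by
  simp_rw [and_comm (a := p _)]
  rw [← filter_filter, filter_disjoint_neg_powersetCard hH, filter_image,
    card_image_of_injOn ((injOn_reorient hH m).mono (coe_subset.2 (filter_subset _ _))),
    card_filter, sum_sigma]
  simp only [card_filter]

theorem card_filter_disjoint_neg_powersetCard (hH : Disjoint H (-H)) (m : ℕ) :
    #{Y ∈ powersetCard m (H ∪ -H) | Disjoint Y (-Y)} = #(powersetCard m H) * 2 ^ m := by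
  rw [filter_disjoint_neg_powersetCard hH, card_image_of_injOn (injOn_reorient hH m), card_sigma]
  refine sum_const_nat fun Z hZ ↦ ?_
  rw [card_powerset, (mem_powersetCard.1 hZ).2]

end Reorientation

section Chambers

theorem card_connectedComponents_eq_ncard_range {X α : Type*} [TopologicalSpace X] {g : X → α}
    (hg : IsLocallyConstant g)
    (hconn : ∀ x y, g x = g y → connectedComponent x = connectedComponent y) :
    Nat.card (ConnectedComponents X) = (Set.range g).ncard := by
  have hlift : ∀ x y, connectedComponent x = connectedComponent y → g x = g y := fun x y hxy ↦
    hg.apply_eq_of_isPreconnected isPreconnected_connectedComponent mem_connectedComponent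
      (hxy ▸ mem_connectedComponent)
  let G : ConnectedComponents X → α := Quotient.lift (s := connectedComponentSetoid X) g hlift
  have hG : Function.Injective G := by
    rintro ⟨x⟩ ⟨y⟩ hxy
    exact ConnectedComponents.coe_eq_coe.2 (hconn x y hxy)
  rw [← Set.range_quotient_lift (s := connectedComponentSetoid X) hlift, ← Nat.card_coe_set_eq]
  exact Nat.card_congr (Equiv.ofInjective G hG)

variable {E ι : Type*} [AddCommGroup E] [Module ℝ E] [TopologicalSpace E]
  {s : Finset ι} {f : ι → StrongDual ℝ E}

/-- The complement of the arrangement of the kernels of the functionals `f i`, `i ∈ s`. -/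
def hyperplaneComplement (s : Finset ι) (f : ι → StrongDual ℝ E) : Set E :=
  {x | ∀ i ∈ s, f i x ≠ 0}

/-- The sign vector of a point `x` of the complement of the arrangement, encoded as the set of
indices `i ∈ s` for which `x` lies on the positive side of the kernel of `f i`. -/
def positiveSide (s : Finset ι) (f : ι → StrongDual ℝ E) (x : E) : Finset ι :=
  {i ∈ s | 0 < f i x}

theorem isLocallyConstant_positiveSide :
    IsLocallyConstant fun x : hyperplaneComplement s f ↦ positiveSide s f x := by
  refine (IsLocallyConstant.iff_eventually_eq _).2 fun x ↦ ?_
  have hsign : ∀ i ∈ s, ∀ᶠ y : hyperplaneComplement s f in nhds x, 0 < f i y ↔ 0 < f i x := by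
    intro i hi
    have hcont : ContinuousAt (fun y : hyperplaneComplement s f ↦ f i y) x := by fun_prop
    rcases lt_or_gt_of_ne (x.2 i hi) with hneg | hpos
    · filter_upwards [hcont.eventually_lt_const hneg] with y hy
      exact iff_of_false hy.not_gt hneg.not_gt
    · filter_upwards [hcont.eventually_const_lt hpos] with y hy
      exact iff_of_true hy hpos
  filter_upwards [(eventually_all_finset s).2 hsign] with y hy
  exact filter_congr hy

theorem segment_subset_hyperplaneComplement {x y : E} (hx : x ∈ hyperplaneComplement s f)
    (hy : y ∈ hyperplaneComplement s f) (hxy : positiveSide s f x = positiveSide s f y) :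
    segment ℝ x y ⊆ hyperplaneComplement s f := by
  intro z hz i hi
  have hiff : 0 < f i x ↔ 0 < f i y := by
    simpa [positiveSide, hi] using Finset.ext_iff.1 hxy i
  have hlin : IsLinearMap ℝ (f i) := (f i).toLinearMap.isLinear
  rcases lt_or_gt_of_ne (hx i hi) with hneg | hpos
  · have hyneg : f i y < 0 := (hy i hi).lt_of_le (not_lt.1 fun h ↦ hneg.not_gt (hiff.2 h))
    exact ((convex_halfSpace_lt hlin 0).segment_subset hneg hyneg hz).ne
  · exact ((convex_halfSpace_gt hlin 0).segment_subset hpos (hiff.1 hpos) hz).ne'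

theorem range_positiveSide :
    (Set.range fun x : hyperplaneComplement s f ↦ positiveSide s f x) =
      ({T ∈ s.powerset | ∃ x, (∀ i ∈ T, 0 < f i x) ∧ ∀ i ∈ s, i ∉ T → f i x < 0} :
        Finset (Finset ι)) := by
  ext T
  simp only [Set.mem_range, coe_filter, mem_powerset, Set.mem_ofPred_eq]
  constructor
  · rintro ⟨x, rfl⟩
    refine ⟨filter_subset _ _, x, fun i hi ↦ (mem_filter.1 hi).2,
      fun i hi hipos ↦ ?_⟩
    exact (x.2 i hi).lt_of_le (not_lt.1 fun h ↦ hipos (mem_filter.2 ⟨hi, h⟩))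
  · rintro ⟨hT, x, hpos, hneg⟩
    refine ⟨⟨x, fun i hi ↦ ?_⟩, ?_⟩
    · by_cases hiT : i ∈ T
      · exact (hpos i hiT).ne'
      · exact (hneg i hi hiT).ne
    · ext i
      refine mem_filter.trans ⟨fun ⟨hi, h⟩ ↦ ?_, fun hi ↦ ⟨hT hi, hpos i hi⟩⟩
      by_contra hiT
      exact (hneg i hi hiT).not_gt h

variable [IsTopologicalAddGroup E] [ContinuousSMul ℝ E]

theorem connectedComponent_eq_of_positiveSide_eq (x y : hyperplaneComplement s f)
    (hxy : positiveSide s f x = positiveSide s f y) :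
    connectedComponent x = connectedComponent y := by
  have hsub := segment_subset_hyperplaneComplement x.2 y.2 hxy
  have hconn : IsPreconnected (Subtype.val ⁻¹' segment ℝ x.1 y.1 :
      Set (hyperplaneComplement s f)) := by
    rw [← Topology.IsInducing.subtypeVal.isPreconnected_image, Subtype.image_preimage_coe,
      Set.inter_eq_right.2 hsub]
    exact (convex_segment x.1 y.1).isPreconnected
  exact connectedComponent_eq (hconn.subset_connectedComponent
    (left_mem_segment ℝ x.1 y.1) (right_mem_segment ℝ x.1 y.1))

theorem card_connectedComponents_hyperplaneComplement (s : Finset ι) (f : ι → StrongDual ℝ E) :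
    Nat.card (ConnectedComponents (hyperplaneComplement s f)) =
      #{T ∈ s.powerset | ∃ x, (∀ i ∈ T, 0 < f i x) ∧ ∀ i ∈ s, i ∉ T → f i x < 0} := by
  rw [card_connectedComponents_eq_ncard_range isLocallyConstant_positiveSide
    connectedComponent_eq_of_positiveSide_eq, range_positiveSide, Set.ncard_coe_finset]

end Chambers

section Convexity

theorem segment_neg_self {E : Type*} [AddCommGroup E] [Module ℝ E] (v : E) :
    segment ℝ (-v) v = (fun c : ℝ ↦ c • v) '' Set.Icc (-1) 1 := by
  have h := image_segment ℝ (LinearMap.toSpanSingleton ℝ E v).toAffineMap (-1) 1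
  simpa [segment_eq_Icc] using h.symm

theorem zero_notMem_convexHull_iff_exists_strongDual_pos {E : Type*} [AddCommGroup E] [Module ℝ E]
    [TopologicalSpace E] [IsTopologicalAddGroup E] [ContinuousSMul ℝ E] [LocallyConvexSpace ℝ E]
    [T2Space E] {S : Set E} (hS : S.Finite) :
    0 ∉ convexHull ℝ S ↔ ∃ f : StrongDual ℝ E, ∀ s ∈ S, 0 < f s := by
  constructor
  · intro h
    obtain ⟨f, u, hu, hf⟩ := geometric_hahn_banach_point_closed (convex_convexHull ℝ S)
      (hS.isClosed_convexHull ℝ) h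
    exact ⟨f, fun s hs ↦ (map_zero f ▸ hu).trans (hf s (subset_convexHull ℝ S hs))⟩
  · rintro ⟨f, hf⟩ h
    have hpos : (0 : E) ∈ {x | 0 < f x} :=
      convexHull_min hf (convex_halfSpace_gt f.toLinearMap.isLinear 0) h
    exact hpos.ne' (map_zero f)

theorem zero_notMem_convexHull_iff_exists_dotProduct_pos {ι : Type*} [Fintype ι]
    {S : Set (ι → ℝ)} (hS : S.Finite) :
    0 ∉ convexHull ℝ S ↔ ∃ x : ι → ℝ, ∀ s ∈ S, 0 < s ⬝ᵥ x := by
  rw [zero_notMem_convexHull_iff_exists_strongDual_pos hS,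
    ((dotProductEquiv ℝ ι).trans LinearMap.toContinuousLinearMap).surjective.exists]
  simp [dotProduct_comm]

end Convexity

section AntipodalConfigurations

theorem chi_eq_card_filter_reorient {r : ℕ} (S : Finset (Fin r → ℝ)) :
    chi S = #{T ∈ S.powerset | 0 ∉ convexHull ℝ (reorient S T : Set (Fin r → ℝ))} := by
  let f (s : Fin r → ℝ) : StrongDual ℝ (Fin r → ℝ) :=
    LinearMap.toContinuousLinearMap (dotProductEquiv ℝ (Fin r) s)
  have hf : ∀ s x, f s x = s ⬝ᵥ x := fun _ _ ↦ rfl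
  have hchi : chi S = Nat.card (ConnectedComponents (hyperplaneComplement S f)) := rfl
  rw [hchi, card_connectedComponents_hyperplaneComplement]
  refine congrArg card (filter_congr fun T _ ↦ ?_)
  rw [zero_notMem_convexHull_iff_exists_dotProduct_pos (finite_toSet _)]
  refine exists_congr fun x ↦ ?_
  have hneg : (∀ s ∈ S, s ∉ T → s ⬝ᵥ x < 0) ↔ ∀ s ∈ -(S \ T), 0 < s ⬝ᵥ x := by
    rw [neg_surjective.forall (p := fun s ↦ s ∈ -(S \ T) → 0 < s ⬝ᵥ x)]
    simp only [mem_neg', neg_neg, Finset.mem_sdiff, and_imp, neg_dotProduct, neg_pos]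
  simp only [hf, hneg, reorient, mem_coe, forall_mem_union]

theorem noAntipodal_iff_disjoint_neg {k : ℕ} {Y : Finset (Fin k → ℝ)} :
    NoAntipodal Y ↔ Disjoint Y (-Y) :=
  disjoint_neg_self_iff.symm

theorem card_filter_zero_notMem_convexHull_and_noAntipodal {k : ℕ} {H : Finset (Fin k → ℝ)}
    (hH : NoAntipodal H) (m : ℕ) :
    #((powersetCard m (H ∪ -H)).filter fun Y : Finset (Fin k → ℝ) ↦
        0 ∉ convexHull ℝ (Y : Set (Fin k → ℝ)) ∧ NoAntipodal Y) =
      ∑ Z ∈ powersetCard m H, chi Z := by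
  simp only [noAntipodal_iff_disjoint_neg] at hH ⊢
  simp only [chi_eq_card_filter_reorient]
  convert card_filter_and_disjoint_neg_powersetCard hH m fun Y ↦
    0 ∉ convexHull ℝ (Y : Set (Fin k → ℝ))

theorem card_filter_noAntipodal {k : ℕ} {H : Finset (Fin k → ℝ)} (hH : NoAntipodal H) (m : ℕ) :
    #{Y ∈ powersetCard m (H ∪ -H) | NoAntipodal Y} = #(powersetCard m H) * 2 ^ m := by
  simp only [noAntipodal_iff_disjoint_neg] at hH ⊢
  convert card_filter_disjoint_neg_powersetCard hH m

end AntipodalConfigurations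

section Projection

theorem mem_pmCube {d : ℕ} {v : Fin d → ℝ} : v ∈ pmCube d ↔ ∀ i, v i = 1 ∨ v i = -1 := by
  refine mem_image.trans ⟨?_, fun h ↦ ⟨fun i ↦ decide (v i = 1), mem_univ _, ?_⟩⟩
  · rintro ⟨ε, -, rfl⟩ i
    cases h : ε i <;> simp [h]
  · ext i
    rcases h i with h | h <;> norm_num [h]

theorem mem_pmCubeStar {d : ℕ} {v : Fin d → ℝ} :
    v ∈ pmCubeStar d ↔ v ∈ pmCube d ∧ v ≠ -allOne d ∧ v ≠ allOne d := by
  simp [pmCubeStar]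

theorem neg_mem_pmCubeStar {d : ℕ} {v : Fin d → ℝ} (hv : v ∈ pmCubeStar d) :
    -v ∈ pmCubeStar d := by
  obtain ⟨hcube, hneg, hone⟩ := mem_pmCubeStar.1 hv
  refine mem_pmCubeStar.2 ⟨mem_pmCube.2 fun i ↦ ?_, fun h ↦ hone (neg_injective h),
    fun h ↦ hneg (neg_eq_iff_eq_neg.1 h)⟩
  simpa [neg_eq_iff_eq_neg, or_comm] using mem_pmCube.1 hcube i

theorem pmCube_subset_Icc (d : ℕ) :
    (pmCube d : Set (Fin d → ℝ)) ⊆ Set.Icc (-allOne d) (allOne d) := by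
  intro v hv
  have hcube := mem_pmCube.1 hv
  constructor <;> intro i <;> rcases hcube i with h | h <;> norm_num [allOne, h]

variable {r : ℕ}

theorem isLinearMap_phi (r : ℕ) : IsLinearMap ℝ (phi r) where
  map_add x y := by
    ext i
    simp only [phi, Pi.add_apply, sum_add_distrib]
    ring
  map_smul c x := by
    ext i
    simp only [phi, Pi.smul_apply, smul_eq_mul, ← mul_sum]
    ring

theorem phi_eq_zero_iff {x : Fin (r + 1) → ℝ} :
    phi r x = 0 ↔ x = x (Fin.last r) • allOne (r + 1) := by
  have hr : (r + 1 : ℝ) ≠ 0 := by positivity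
  constructor
  · intro h
    have hcoord : ∀ i : Fin r, x i.castSucc = (∑ j, x j) / (r + 1 : ℝ) :=
      fun i ↦ sub_eq_zero.1 (congrFun h i)
    have hlast : x (Fin.last r) = (∑ j, x j) / (r + 1 : ℝ) := by
      have hsum := Fin.sum_univ_castSucc x
      rw [eq_div_iff hr]
      simp only [hcoord, sum_const, card_univ, Fintype.card_fin, nsmul_eq_mul] at hsum
      field_simp at hsum
      linarith
    ext i
    refine Fin.lastCases ?_ (fun i ↦ ?_) i
    · simp [allOne]
    · simp [allOne, hcoord, hlast]
  · intro h
    rw [h]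
    ext i
    simp [phi, allOne, field]

theorem mem_segment_allOne_iff_phi_eq_zero {x : Fin (r + 1) → ℝ}
    (hx : x ∈ Set.Icc (-allOne (r + 1)) (allOne (r + 1))) :
    x ∈ segment ℝ (-allOne (r + 1)) (allOne (r + 1)) ↔ phi r x = 0 := by
  rw [segment_neg_self, phi_eq_zero_iff]
  constructor
  · rintro ⟨c, -, rfl⟩
    simp [allOne]
  · exact fun h ↦ ⟨x (Fin.last r), ⟨hx.1 _, hx.2 _⟩, h.symm⟩

theorem convexHull_inter_segment_eq_empty_iff {Y : Set (Fin (r + 1) → ℝ)}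
    (hY : Y ⊆ Set.Icc (-allOne (r + 1)) (allOne (r + 1))) :
    convexHull ℝ Y ∩ segment ℝ (-allOne (r + 1)) (allOne (r + 1)) = ∅ ↔
      0 ∉ convexHull ℝ (phi r '' Y) := by
  have hhull := convexHull_min hY (convex_Icc (𝕜 := ℝ) _ _)
  rw [← (isLinearMap_phi r).image_convexHull, Set.eq_empty_iff_forall_notMem]
  simp only [Set.mem_inter_iff, Set.mem_image, not_and, not_exists]
  exact forall₂_congr fun x hx ↦ not_congr (mem_segment_allOne_iff_phi_eq_zero (hhull hx))

theorem phi_neg (x : Fin (r + 1) → ℝ) : phi r (-x) = -phi r x :=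
  (isLinearMap_phi r).map_neg x

theorem phi_injOn_pmCubeStar (r : ℕ) : Set.InjOn (phi r) (pmCubeStar (r + 1)) := by
  intro x hx y hy hxy
  obtain ⟨hxcube, hxneg, hxone⟩ := mem_pmCubeStar.1 hx
  have hycube := (mem_pmCubeStar.1 hy).1
  have hsub : x - y = (x - y) (Fin.last r) • allOne (r + 1) := by
    rw [← phi_eq_zero_iff, (isLinearMap_phi r).map_sub, hxy, sub_self]
  set c := (x - y) (Fin.last r)
  have hcoord : ∀ i, x i - y i = c := fun i ↦ by simpa [allOne] using congrFun hsub i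
  -- On `±1`-vectors a constant nonzero difference `c` forces `c = ±2` and then `x = ±𝟙`.
  have hc : c = 0 ∨ c = 2 ∨ c = -2 := by
    rw [← hcoord 0]
    rcases mem_pmCube.1 hxcube 0 with h | h <;> rcases mem_pmCube.1 hycube 0 with h' | h' <;>
      norm_num [h, h']
  rcases hc with hc | hc | hc
  · exact funext fun i ↦ sub_eq_zero.1 ((hcoord i).trans hc)
  · refine absurd (funext fun i ↦ ?_) hxone
    rcases mem_pmCube.1 hxcube i with h | h <;> rcases mem_pmCube.1 hycube i with h' | h' <;>
      linarith [hcoord i, show allOne (r + 1) i = 1 from rfl]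
  · refine absurd (funext fun i ↦ ?_) hxneg
    rcases mem_pmCube.1 hxcube i with h | h <;> rcases mem_pmCube.1 hycube i with h' | h' <;>
      linarith [hcoord i, show (-allOne (r + 1)) i = -1 from rfl]

theorem Vr_eq_union_neg (r : ℕ) : Vr r = VrPlus r ∪ -VrPlus r := by
  ext z
  simp only [Vr, VrPlus, mem_union, mem_neg', mem_image, mem_filter]
  constructor
  · rintro ⟨v, hv, rfl⟩
    rcases mem_pmCube.1 (mem_pmCubeStar.1 hv).1 (Fin.last r) with h | h
    · exact Or.inl ⟨v, ⟨hv, h⟩, rfl⟩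
    · exact Or.inr ⟨-v, ⟨neg_mem_pmCubeStar hv, by simp [h]⟩, phi_neg v⟩
  · rintro (⟨v, ⟨hv, -⟩, rfl⟩ | ⟨v, ⟨hv, -⟩, hz⟩)
    · exact ⟨v, hv, rfl⟩
    · exact ⟨-v, neg_mem_pmCubeStar hv, by rw [phi_neg, hz, neg_neg]⟩

theorem noAntipodal_VrPlus (r : ℕ) : NoAntipodal (VrPlus r) := by
  intro z hz hnegz
  obtain ⟨v, hv, rfl⟩ := mem_image.1 hz
  obtain ⟨w, hw, hwv⟩ := mem_image.1 hnegz
  rw [mem_filter] at hv hw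
  rw [← phi_neg] at hwv
  have heq : w = -v := phi_injOn_pmCubeStar r hw.1 (neg_mem_pmCubeStar hv.1) hwv
  have hlast := congrFun heq (Fin.last r)
  rw [hw.2, Pi.neg_apply, hv.2] at hlast
  norm_num at hlast

theorem noAntipodal_image_phi_iff {Y : Finset (Fin (r + 1) → ℝ)} (hY : Y ⊆ pmCubeStar (r + 1)) :
    NoAntipodal (Y.image (phi r)) ↔ NoAntipodal Y := by
  simp only [NoAntipodal, forall_mem_image, ← phi_neg]
  refine forall₂_congr fun y hy ↦ not_congr ?_
  rw [← mem_coe, coe_image]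
  exact (phi_injOn_pmCubeStar r).mem_image_iff (coe_subset.2 hY) (neg_mem_pmCubeStar (hY hy))

theorem alpha_succ_eq (r m : ℕ) :
    alpha (r + 1) m =
      (#((powersetCard m (Vr r)).filter fun Y : Finset (Fin r → ℝ) ↦
          0 ∉ convexHull ℝ (Y : Set (Fin r → ℝ)) ∧ NoAntipodal Y) : ℝ) /
        #{Y ∈ powersetCard m (Vr r) | NoAntipodal Y} := by
  simp only [alpha, Vr, card_filter_powersetCard_image (phi_injOn_pmCubeStar r)]
  congr 3 <;> refine filter_congr fun Y hY ↦ ?_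
  all_goals
    have hsub := (mem_powersetCard.1 hY).1
    rw [noAntipodal_image_phi_iff hsub]
  rw [coe_image, convexHull_inter_segment_eq_empty_iff
    ((coe_subset.2 (hsub.trans sdiff_subset)).trans (pmCube_subset_Icc _))]

end Projection

theorem statement11 (r m : ℕ) :
    alpha (r + 1) m =
      (1 / 2 ^ m) *
        ((∑ Z ∈ (VrPlus r).powersetCard m, (chi Z : ℝ)) /
          (((VrPlus r).powersetCard m).card : ℝ)) := by
  rw [alpha_succ_eq, Vr_eq_union_neg,
    card_filter_zero_notMem_convexHull_and_noAntipodal (noAntipodal_VrPlus r),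
    card_filter_noAntipodal (noAntipodal_VrPlus r)]
  push_cast
  rw [one_div_mul_eq_div, div_div]

end
end

section
/- (Harding/Winder) For every m-element subset S of ℝ^r \ {0}, the number of chambers of the hyperplane arrangement defined by S satisfies χ(S) ≤ 2·b(r−1, m−1), where b(p,q) := Σ_{i=0}^{p} C(q,i). -/
open Finset Filter MeasureTheory

open scoped Classical

noncomputable section

/-!
A chamber is determined by the signs of the functionals `f i` on it: the points with prescribed
signs form a convex, hence connected, set. It therefore suffices to count sign vectors, by deletion
and restriction. Deleting `f 0` merges two sign vectors exactly when they differ only in that entry;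
a segment joining points that realise them meets `ker (f 0)` in a point with the same remaining
signs. So the largest number `N(d, n)` of sign vectors of `n` functionals in dimension `d` satisfies
`N(d, n + 1) ≤ N(d, n) + N(d - 1, n)`, which is Pascal's recursion for the bound.
-/

section SignVectors

variable {K E ι : Type*} [Field K] [LinearOrder K] [AddCommGroup E] [Module K E]

/-- The complement of the union of the kernels of the linear functionals `f i`. The functionals form
a family rather than a set, so that they may coincide after restriction to a subspace without harm;
a vanishing functional makes the complement empty. -/
def arrangementComplement (f : ι → Module.Dual K E) : Set E :=
  {x | ∀ i, f i x ≠ 0}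

/-- The position of the point `x` relative to the kernels of the functionals `f i`, as the family
of the signs of the values `f i x`. -/
def signVector (f : ι → Module.Dual K E) (x : E) : ι → SignType :=
  fun i => SignType.sign (f i x)

/-- The sign vectors of the chambers of an arrangement, i.e. those realised off all hyperplanes. -/
def chamberSignVectors (f : ι → Module.Dual K E) : Set (ι → SignType) :=
  signVector f '' arrangementComplement f

lemma mem_chamberSignVectors_iff {f : ι → Module.Dual K E} {σ : ι → SignType} :
    σ ∈ chamberSignVectors f ↔ (∀ i, σ i ≠ 0) ∧ ∃ x, signVector f x = σ := by
  constructor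
  · rintro ⟨x, hx, rfl⟩
    exact ⟨fun i => sign_ne_zero.mpr (hx i), x, rfl⟩
  · rintro ⟨hσ, x, rfl⟩
    exact ⟨x, fun i => sign_ne_zero.mp (hσ i), rfl⟩

lemma chamberSignVectors_eq_empty {f : ι → Module.Dual K E} {i : ι} (hi : f i = 0) :
    chamberSignVectors f = ∅ := by
  refine Set.image_eq_empty.mpr (Set.eq_empty_of_forall_notMem fun x hx => hx i ?_)
  rw [hi, LinearMap.zero_apply]

/-- The restriction of the arrangement `f` to its hyperplane `ker (f 0)`: the intersections of that
hyperplane with the remaining ones. -/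
def arrangementRestriction {n : ℕ} (f : Fin (n + 1) → Module.Dual K E) :
    Fin n → Module.Dual K (LinearMap.ker (f 0)) :=
  fun i => (f i.succ).domRestrict (LinearMap.ker (f 0))

lemma tail_mem_chamberSignVectors {n : ℕ} {f : Fin (n + 1) → Module.Dual K E}
    {σ : Fin (n + 1) → SignType} (hσ : σ ∈ chamberSignVectors f) :
    Fin.tail σ ∈ chamberSignVectors (Fin.tail f) := by
  obtain ⟨x, hx, rfl⟩ := hσ
  exact ⟨x, fun i => hx i.succ, rfl⟩

lemma chamberSignVectors_subset_cons {n : ℕ} (f : Fin (n + 1) → Module.Dual K E) :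
    chamberSignVectors f ⊆
      Fin.cons 1 '' {τ | Fin.cons 1 τ ∈ chamberSignVectors f} ∪
        Fin.cons (-1) '' {τ | Fin.cons (-1) τ ∈ chamberSignVectors f} := by
  intro σ hσ
  have hσ₀ : σ 0 ≠ 0 := (mem_chamberSignVectors_iff.mp hσ).1 0
  rcases SignType.trichotomy (σ 0) with h | h | h
  · exact Or.inr ⟨Fin.tail σ, by simpa [← h], by simp [← h]⟩
  · exact absurd h hσ₀
  · exact Or.inl ⟨Fin.tail σ, by simpa [← h], by simp [← h]⟩

variable [IsStrictOrderedRing K]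

lemma convex_preimage_signVector_singleton (f : ι → Module.Dual K E) (σ : ι → SignType) :
    Convex K (signVector f ⁻¹' {σ}) := by
  have hcell : signVector f ⁻¹' {σ} = ⋂ i, f i ⁻¹' (SignType.sign ⁻¹' {σ i}) := by
    ext x
    simp [signVector, funext_iff]
  rw [hcell]
  exact convex_iInter fun i =>
    (Set.ordConnected_singleton.preimage_mono SignType.sign.monotone).convex.linear_preimage (f i)

lemma exists_mem_segment_apply_eq_zero {f : Module.Dual K E} {x y : E} (hx : 0 ≤ f x)
    (hy : f y ≤ 0) : ∃ z ∈ segment K x y, f z = 0 := by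
  have hzero : (0 : K) ∈ f.toAffineMap '' segment K x y := by
    rw [image_segment, segment_eq_uIcc]
    exact Set.mem_uIcc_of_ge hy hx
  exact hzero

lemma mem_chamberSignVectors_arrangementRestriction {n : ℕ} {f : Fin (n + 1) → Module.Dual K E}
    {τ : Fin n → SignType}
    (hpos : Fin.cons 1 τ ∈ chamberSignVectors f) (hneg : Fin.cons (-1) τ ∈ chamberSignVectors f) :
    τ ∈ chamberSignVectors (arrangementRestriction f) := by
  obtain ⟨hτ, x, hx⟩ := mem_chamberSignVectors_iff.mp hpos
  obtain ⟨-, y, hy⟩ := mem_chamberSignVectors_iff.mp hneg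
  have hfx : 0 < f 0 x := sign_eq_one_iff.mp (congrFun hx 0)
  have hfy : f 0 y < 0 := sign_eq_neg_one_iff.mp (congrFun hy 0)
  obtain ⟨z, hz, hfz⟩ := exists_mem_segment_apply_eq_zero hfx.le hfy.le
  have hzτ : signVector (Fin.tail f) z = τ :=
    (convex_preimage_signVector_singleton (Fin.tail f) τ).segment_subset
      (congrArg Fin.tail hx) (congrArg Fin.tail hy) hz
  exact mem_chamberSignVectors_iff.mpr ⟨fun i => hτ i.succ, ⟨z, hfz⟩, hzτ⟩

lemma ncard_chamberSignVectors_succ_le {n : ℕ} (f : Fin (n + 1) → Module.Dual K E) :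
    (chamberSignVectors f).ncard ≤ (chamberSignVectors (Fin.tail f)).ncard +
      (chamberSignVectors (arrangementRestriction f)).ncard := by
  let P : Set (Fin n → SignType) := {τ | Fin.cons 1 τ ∈ chamberSignVectors f}
  let N : Set (Fin n → SignType) := {τ | Fin.cons (-1) τ ∈ chamberSignVectors f}
  have hunion : P ∪ N ⊆ chamberSignVectors (Fin.tail f) :=
    Set.union_subset (fun _ hτ => tail_mem_chamberSignVectors hτ)
      fun _ hτ => tail_mem_chamberSignVectors hτ
  have hinter : P ∩ N ⊆ chamberSignVectors (arrangementRestriction f) :=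
    fun _ hτ => mem_chamberSignVectors_arrangementRestriction hτ.1 hτ.2
  calc (chamberSignVectors f).ncard
      ≤ (Fin.cons 1 '' P ∪ Fin.cons (-1) '' N).ncard :=
        Set.ncard_le_ncard (chamberSignVectors_subset_cons f)
    _ ≤ P.ncard + N.ncard :=
        (Set.ncard_union_le _ _).trans (add_le_add Set.ncard_image_le Set.ncard_image_le)
    _ = (P ∪ N).ncard + (P ∩ N).ncard := (Set.ncard_union_add_ncard_inter P N).symm
    _ ≤ _ := add_le_add (Set.ncard_le_ncard hunion) (Set.ncard_le_ncard hinter)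

end SignVectors

section Counting

lemma sum_range_succ_choose_succ (d n : ℕ) :
    ∑ i ∈ range (d + 1), (n + 1).choose i =
      ∑ i ∈ range (d + 1), n.choose i + ∑ i ∈ range d, n.choose i := by
  simp only [sum_range_succ' _ d, Nat.choose_succ_succ', sum_add_distrib, Nat.choose_zero_right]
  ring

variable {K E : Type*} [Field K] [LinearOrder K] [IsStrictOrderedRing K] [AddCommGroup E]
  [Module K E] [FiniteDimensional K E]

theorem ncard_chamberSignVectors_le (n : ℕ) (f : Fin (n + 1) → Module.Dual K E) :
    (chamberSignVectors f).ncard ≤ 2 * ∑ i ∈ range (Module.finrank K E), n.choose i := by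
  induction n generalizing E with
  | zero =>
    by_cases hf : f 0 = 0
    · simp [chamberSignVectors_eq_empty hf]
    · calc (chamberSignVectors f).ncard
          ≤ 1 + 1 := (ncard_chamberSignVectors_succ_le f).trans
            (add_le_add (Set.ncard_le_one_of_subsingleton _) (Set.ncard_le_one_of_subsingleton _))
        _ = 2 * ∑ i ∈ range (Module.finrank K E), Nat.choose 0 i := by
            rw [← Module.Dual.finrank_ker_add_one_of_ne_zero hf, sum_range_succ']
            simp
  | succ n ih =>
    by_cases hf : f 0 = 0
    · simp [chamberSignVectors_eq_empty hf]
    · calc (chamberSignVectors f).ncard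
          ≤ 2 * ∑ i ∈ range (Module.finrank K E), n.choose i +
              2 * ∑ i ∈ range (Module.finrank K (LinearMap.ker (f 0))), n.choose i :=
            (ncard_chamberSignVectors_succ_le f).trans (add_le_add (ih _) (ih _))
        _ = 2 * ∑ i ∈ range (Module.finrank K E), (n + 1).choose i := by
            rw [← Module.Dual.finrank_ker_add_one_of_ne_zero hf, sum_range_succ_choose_succ,
              mul_add]

end Counting

section Chambers

lemma card_connectedComponents_le_ncard_range {X α : Type*} [TopologicalSpace X] (g : X → α)
    (hfin : (Set.range g).Finite) (hg : ∀ x, IsPreconnected (g ⁻¹' {g x})) :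
    Nat.card (ConnectedComponents X) ≤ (Set.range g).ncard := by
  have := hfin.to_subtype
  refine Nat.card_le_card_of_surjective
    (fun a => ConnectedComponents.mk (Set.rangeSplitting g a)) fun c => ?_
  obtain ⟨x, rfl⟩ := ConnectedComponents.surjective_coe c
  refine ⟨⟨g x, x, rfl⟩, ConnectedComponents.coe_eq_coe'.mpr ?_⟩
  exact (hg x).subset_connectedComponent rfl (Set.apply_rangeSplitting g _)

variable {E ι : Type*} [AddCommGroup E] [Module ℝ E] [TopologicalSpace E] [ContinuousAdd E]
  [ContinuousSMul ℝ E] [Finite ι]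

theorem card_chambers_le_ncard_chamberSignVectors (f : ι → Module.Dual ℝ E) :
    Nat.card (ConnectedComponents (arrangementComplement f)) ≤ (chamberSignVectors f).ncard := by
  rw [chamberSignVectors, Set.image_eq_range]
  refine card_connectedComponents_le_ncard_range _ (Set.toFinite _) fun x => ?_
  let cell : Set E := signVector f ⁻¹' {signVector f x}
  have hcell : cell ⊆ arrangementComplement f := fun y hy i =>
    sign_ne_zero.mp ((congrFun hy i).trans_ne (sign_ne_zero.mpr (x.2 i)))
  change IsPreconnected (Subtype.val ⁻¹' cell)
  rw [← Topology.IsInducing.subtypeVal.isPreconnected_image, Subtype.image_preimage_val,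
    Set.inter_eq_right.mpr hcell]
  exact (convex_preimage_signVector_singleton f _).isPreconnected

lemma arrComplement_eq_arrangementComplement {r : ℕ} (S : Finset (Fin r → ℝ)) :
    arrComplement S = arrangementComplement fun s : S => dotProductBilin ℝ ℝ s.val := by
  ext
  simp [arrComplement, arrangementComplement, dotProduct]

end Chambers

theorem statement12_general {E ι : Type*} [AddCommGroup E] [Module ℝ E] [FiniteDimensional ℝ E]
    [TopologicalSpace E] [ContinuousAdd E] [ContinuousSMul ℝ E] [Finite ι]
    (f : ι → Module.Dual ℝ E) :
    Nat.card (ConnectedComponents (arrangementComplement f)) ≤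
      2 * bFn (Module.finrank ℝ E - 1) (Nat.card ι - 1) := by
  rcases isEmpty_or_nonempty ι with hι | hι
  · calc Nat.card (ConnectedComponents (arrangementComplement f))
        ≤ (chamberSignVectors f).ncard := card_chambers_le_ncard_chamberSignVectors f
      _ ≤ 1 := Set.ncard_le_one_of_subsingleton _
      _ ≤ _ := by rw [bFn, sum_range_succ', Nat.choose_zero_right]; lia
  · obtain ⟨n, hn⟩ := Nat.exists_eq_add_one_of_ne_zero (Nat.card_pos (α := ι)).ne'
    let e : Fin (n + 1) ≃ ι := (Finite.equivFinOfCardEq hn).symm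
    have hreindex : arrangementComplement f = arrangementComplement (f ∘ e) :=
      Set.ext fun x => e.forall_congr_right.symm
    calc Nat.card (ConnectedComponents (arrangementComplement f))
        ≤ (chamberSignVectors (f ∘ e)).ncard :=
          hreindex ▸ card_chambers_le_ncard_chamberSignVectors (f ∘ e)
      _ ≤ 2 * ∑ i ∈ range (Module.finrank ℝ E), n.choose i := ncard_chamberSignVectors_le n _
      _ ≤ 2 * bFn (Module.finrank ℝ E - 1) (Nat.card ι - 1) := by
          rw [hn, Nat.add_sub_cancel, bFn]
          gcongr
          lia

-- STATEMENT 12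
theorem statement12 {r : ℕ} (m : ℕ) (S : Finset (Fin r → ℝ)) (hcard : S.card = m)
    (hS : (0 : Fin r → ℝ) ∉ S) :
    chi S ≤ 2 * bFn (r - 1) (m - 1) := by
  rw [chi, arrComplement_eq_arrangementComplement]
  simpa [hcard] using statement12_general fun s : S => dotProductBilin ℝ ℝ s.val

end
end
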